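/- Let m ≥ 0 be an integer and let y : ℕ → ℤ be a walk of length m. Then for every j ∈ ℤ: U_j − D_j = 1 if 0 ≤ j < y(m); U_j − D_j = −1 if y(m) ≤ j < 0; and U_j − D_j = 0 otherwise. -/

import Mathlib

/-- Number of upcrossings of the edge `(j, j+1)` by the walk `y` within the first `m` steps. -/
def upcrossings (m : ℕ) (y : ℕ → ℤ) (j : ℤ) : ℕ :=
  ((Finset.range m).filter fun k => y k = j ∧ y (k + 1) = j + 1).card

/-- Number of downcrossings of the edge `(j, j+1)` by the walk `y` within the first `m` steps. -/
def downcrossings (m : ℕ) (y : ℕ → ℤ) (j : ℤ) : ℕ :=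
  ((Finset.range m).filter fun k => y k = j + 1 ∧ y (k + 1) = j).card

/-- Let `m ≥ 0` be an integer and `y : ℕ → ℤ` a walk of length `m`
(`y 0 = 0`, `|y(k+1) - y(k)| = 1`). Then for every `j ∈ ℤ`:
`U_j - D_j = 1` if `0 ≤ j < y(m)`; `U_j - D_j = -1` if `y(m) ≤ j < 0`;
and `U_j - D_j = 0` otherwise. -/
theorem upcrossings_sub_downcrossings (m : ℕ) (y : ℕ → ℤ) (hy0 : y 0 = 0)
    (hy : ∀ k, |y (k + 1) - y k| = 1) (j : ℤ) :
    (upcrossings m y j : ℤ) - (downcrossings m y j : ℤ) =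
      if 0 ≤ j ∧ j < y m then 1 else if y m ≤ j ∧ j < 0 then -1 else 0 := by
  induction m with
  | zero =>
    simp only [upcrossings, downcrossings, Finset.range_zero, Finset.filter_empty,
      Finset.card_empty, hy0]
    split_ifs <;> omega
  | succ n ih =>
    have hU : (upcrossings (n + 1) y j : ℤ) = upcrossings n y j +
        if y n = j ∧ y (n + 1) = j + 1 then 1 else 0 := by
      unfold upcrossings
      rw [Finset.range_add_one, Finset.filter_insert]
      split_ifs <;> simp
    have hD : (downcrossings (n + 1) y j : ℤ) = downcrossings n y j +
        if y n = j + 1 ∧ y (n + 1) = j then 1 else 0 := by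
      unfold downcrossings
      rw [Finset.range_add_one, Finset.filter_insert]
      split_ifs <;> simp
    rw [hU, hD]
    have h := hy n
    rw [abs_eq (by norm_num)] at h
    split_ifs at ih ⊢ <;> omega
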